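/- Assume n is odd and fix indices n₀ ≤ t < j ≤ n. In the tensor product algebra 𝒪_q(B⁺) ⊗_ℂ 𝒪_q(B⁺) define b_s := z_{n₀ s} ⊗ z_{sj} for n₀ ≤ s ≤ j, b_{t+1,j} := Σ_{k=t+1}^{j} b_k, and c_t := b_t b_{t+1,j} − q · b_{t+1,j} b_t. Then: (i) c_t = −(q − q^{−1}) q^{n₀ + 3/2} Σ_{s=t+1}^{j} Σ_{k=n₀+1}^{t} q^{−k} z_{k's} z_{kt} ⊗ z_{sj} z_{tj} (where q^{n₀+3/2} := v^{2n₀+3}); (ii) b_t c_t = q² c_t b_t; (iii) c_t b_{t+1,j} = q² b_{t+1,j} c_t. -/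

import Mathlib

noncomputable section
open scoped TensorProduct

namespace SOq

/-- `pr n k = n + 1 - k`, the "primed" index `k'`. -/
def pr (n k : ℕ) : ℕ := n + 1 - k

/-- `2 ρ_i` as an integer. -/
def twoRho (n i : ℕ) : ℤ :=
  if 2 * i < n + 1 then (n : ℤ) - 2 * i
  else if 2 * i = n + 1 then 0
  else (n : ℤ) + 2 - 2 * i

/-- Entries of the matrix `J`: `c_{ij} = δ_{j,i'} q^{-ρ_i}` (with `q^{1/2} := v`). -/
def Jc (n : ℕ) (v : ℂ) (i j : ℕ) : ℂ :=
  if j = pr n i then v ^ (-(twoRho n i)) else 0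

/-- R-matrix coefficients `R^{ij}_{ab}`. -/
def Rc (n : ℕ) (q v : ℂ) (i j a b : ℕ) : ℂ :=
  q ^ (((if i = j then 1 else 0) - (if i = pr n j then 1 else 0) : ℤ)) *
      (if i = a then (1 : ℂ) else 0) * (if j = b then (1 : ℂ) else 0) +
    (if a < i then (1 : ℂ) else 0) * (q - q⁻¹) *
      ((if j = a then (1 : ℂ) else 0) * (if i = b then (1 : ℂ) else 0) -
        Jc n v j i * Jc n v a b)

/-- The free algebra on the generators `z_{ij}`. -/
abbrev FA : Type := FreeAlgebra ℂ (ℕ × ℕ)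

def zf (i j : ℕ) : FA := FreeAlgebra.ι ℂ (i, j)

/-- The FRT relation element `FRT(i,b,j,a)`. -/
def frtRel (n : ℕ) (q v : ℂ) (i b j a : ℕ) : FA :=
  ∑ k ∈ Finset.Icc 1 n, ∑ l ∈ Finset.Icc 1 n,
    (Rc n q v l k a b • (zf i k * zf j l) - Rc n q v j i k l • (zf k a * zf l b))

/-- Entry `(i,j)` of `z J zᵗ J⁻¹ - Id` (note `J⁻¹ = J`). -/
def orthRel₁ (n : ℕ) (v : ℂ) (i j : ℕ) : FA :=
  (∑ k ∈ Finset.Icc 1 n, ∑ l ∈ Finset.Icc 1 n, ∑ m ∈ Finset.Icc 1 n,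
      (Jc n v k l * Jc n v m j) • (zf i k * zf m l)) - (if i = j then (1 : FA) else 0)

/-- Entry `(i,j)` of `J zᵗ J⁻¹ z - Id`. -/
def orthRel₂ (n : ℕ) (v : ℂ) (i j : ℕ) : FA :=
  (∑ k ∈ Finset.Icc 1 n, ∑ l ∈ Finset.Icc 1 n, ∑ m ∈ Finset.Icc 1 n,
      (Jc n v i k * Jc n v l m) • (zf l k * zf m j)) - (if i = j then (1 : FA) else 0)

/-- The defining relations of the quantum Borel algebra `𝒪_q(B⁺) ⊆ 𝒪_q(SO_n)`. -/
inductive Rel (n : ℕ) (q v : ℂ) : FA → FA → Prop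
  | frt : ∀ i b j a : ℕ, i ∈ Finset.Icc 1 n → b ∈ Finset.Icc 1 n → j ∈ Finset.Icc 1 n →
      a ∈ Finset.Icc 1 n → Rel n q v (frtRel n q v i b j a) 0
  | orth₁ : ∀ i j : ℕ, i ∈ Finset.Icc 1 n → j ∈ Finset.Icc 1 n →
      Rel n q v (orthRel₁ n v i j) 0
  | orth₂ : ∀ i j : ℕ, i ∈ Finset.Icc 1 n → j ∈ Finset.Icc 1 n →
      Rel n q v (orthRel₂ n v i j) 0
  | lower : ∀ i j : ℕ, j < i → Rel n q v (zf i j) 0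
  | out : ∀ i j : ℕ, (i = 0 ∨ j = 0 ∨ n < i ∨ n < j) → Rel n q v (zf i j) 0

/-- The quantum Borel algebra `𝒪_q(B⁺)`. -/
abbrev OB (n : ℕ) (q v : ℂ) : Type := RingQuot (Rel n q v)

/-- The generators `z_{ij}` of `𝒪_q(B⁺)`. -/
def z (n : ℕ) (q v : ℂ) (i j : ℕ) : OB n q v :=
  RingQuot.mkAlgHom ℂ (Rel n q v) (zf i j)

end SOq

namespace SOq

/-!
For two rows and two columns, neither containing a pair of conjugate indices, the orthogonal FRT
relations are those of ordinary quantum matrices. The only orthogonal correction that matters here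
comes from the self-conjugate row `n₀`: it makes `⁅z_{n₀t}, z_{n₀s}⁆` a multiple of
`X_s = ∑_{k = n₀+1}^t q^{-k} z_{k's} z_{kt}`, the range of `k` being cut at `t` by triangularity.
Since the entries of column `j` `q`-commute, `c_t` is a multiple of `∑_s X_s ⊗ z_{sj} z_{tj}`.

The element `z_{n₀t}` commutes with `z_{k's}` and `q`-commutes with `z_{kt}`, whence (ii). For
(iii), the rows `z_{k'·}` and `z_{n₀·}` satisfy Manin's relations between two rows of a quantum
matrix, and `z_{kt}` commutes with `z_{n₀r}` for `r > t`, so `X` and `z_{n₀·}` satisfy them too.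
Since two such rows map the quantum space with coordinates `z_{sj}` to a pair of `q`-commuting
elements, `∑_s X_s ⊗ z_{sj}` and `b_{t+1,j}` `q`-commute; the remaining factor `1 ⊗ z_{tj}`
contributes the second power of `q`.
-/

section QCommute

variable {R A B : Type*} [CommSemiring R] [Semiring A] [Algebra R A] [Semiring B] [Algebra R B]

/-- Two elements `q`-commute: `a b = q b a`. Powers of `q` then multiply along products and tensor
products. -/
def QCommute (q : R) (a b : A) : Prop :=
  a * b = q • (b * a)

lemma qCommute_one_iff {a b : A} : QCommute (1 : R) a b ↔ Commute a b := by
  rw [QCommute, one_smul, Commute, SemiconjBy]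

namespace QCommute

variable {p q : R} {a b c : A}

lemma mul_left (ha : QCommute p a c) (hb : QCommute q b c) : QCommute (p * q) (a * b) c := by
  rw [QCommute, mul_assoc, hb, mul_smul_comm, ← mul_assoc, ha, smul_mul_assoc, smul_smul,
    mul_comm q, mul_assoc]

lemma mul_right (hb : QCommute p a b) (hc : QCommute q a c) : QCommute (p * q) a (b * c) := by
  rw [QCommute, ← mul_assoc, hb, smul_mul_assoc, mul_assoc, hc, mul_smul_comm, smul_smul,
    ← mul_assoc]

lemma smul_left (h : QCommute q a b) (r : R) : QCommute q (r • a) b := by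
  rw [QCommute, smul_mul_assoc, h, mul_smul_comm, smul_comm]

lemma smul_right (h : QCommute q a b) (r : R) : QCommute q a (r • b) := by
  rw [QCommute, mul_smul_comm, h, smul_mul_assoc, smul_comm]

lemma sum_right {ι : Type*} {S : Finset ι} {f : ι → A} (h : ∀ i ∈ S, QCommute q a (f i)) :
    QCommute q a (∑ i ∈ S, f i) := by
  rw [QCommute, Finset.mul_sum, Finset.sum_mul, Finset.smul_sum]
  exact Finset.sum_congr rfl h

lemma tmul {a' b' : B} (h : QCommute p a b) (h' : QCommute q a' b') :
    QCommute (p * q) (a ⊗ₜ[R] a') (b ⊗ₜ[R] b') := by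
  rw [QCommute, Algebra.TensorProduct.tmul_mul_tmul, Algebra.TensorProduct.tmul_mul_tmul, h, h',
    TensorProduct.smul_tmul_smul]

end QCommute

end QCommute

lemma tmul_mul_sum_sub_smul_sum_mul_tmul {R A B ι : Type*} [CommRing R] [Ring A] [Algebra R A]
    [Ring B] [Algebra R B] {q : R} {S : Finset ι} {x : ι → A} {w : ι → B} {a : A} {c : B}
    (h : ∀ s ∈ S, QCommute q c (w s)) :
    (a ⊗ₜ[R] c) * (∑ s ∈ S, x s ⊗ₜ[R] w s) - q • ((∑ s ∈ S, x s ⊗ₜ[R] w s) * (a ⊗ₜ[R] c)) =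
      q • ∑ s ∈ S, ⁅a, x s⁆ ⊗ₜ[R] (w s * c) := by
  simp only [Finset.mul_sum, Finset.sum_mul, Finset.smul_sum, ← Finset.sum_sub_distrib]
  refine Finset.sum_congr rfl fun s hs => ?_
  rw [Algebra.TensorProduct.tmul_mul_tmul, Algebra.TensorProduct.tmul_mul_tmul, h s hs,
    TensorProduct.tmul_smul, ← smul_sub, ← TensorProduct.sub_tmul, Ring.lie_def]

section QuantumRows

variable {K A B ι : Type*} [Field K] [Ring A] [Algebra K A] [Ring B] [Algebra K B] [LinearOrder ι]

/-- Manin's cross relations between an upper row `y` and a lower row `x` of a quantum matrix whose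
columns are indexed by `S`. The relations within each row are not part of the notion. -/
structure QuantumRows (q : K) (S : Finset ι) (y x : ι → A) : Prop where
  qCommute : ∀ s ∈ S, QCommute q (y s) (x s)
  commute : ∀ s ∈ S, ∀ r ∈ S, r < s → Commute (y s) (x r)
  mul_eq : ∀ s ∈ S, ∀ r ∈ S, s < r → y s * x r = x r * y s + (q - q⁻¹) • (x s * y r)

namespace QuantumRows

variable {q : K} {S : Finset ι} {x y : ι → A}

lemma smul (h : QuantumRows q S y x) (p : K) : QuantumRows q S (fun s => p • y s) x where
  qCommute s hs := (h.qCommute s hs).smul_left p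
  commute s hs r hr hrs := (h.commute s hs r hr hrs).smul_left p
  mul_eq s hs r hr hsr := by
    rw [smul_mul_assoc, h.mul_eq s hs r hr hsr, mul_smul_comm, mul_smul_comm, smul_add, smul_comm p]

lemma mul_right (h : QuantumRows q S y x) {u : A} (hu : ∀ r ∈ S, Commute u (x r)) :
    QuantumRows q S (fun s => y s * u) x where
  qCommute s hs := by
    simpa using (h.qCommute s hs).mul_left (qCommute_one_iff.2 (hu s hs))
  commute s hs r hr hrs := (h.commute s hs r hr hrs).mul_left (hu r hr)
  mul_eq s hs r hr hsr := by
    rw [mul_assoc, hu r hr, ← mul_assoc, h.mul_eq s hs r hr hsr, add_mul, smul_mul_assoc, mul_assoc,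
      mul_assoc]

lemma sum {κ : Type*} {T : Finset κ} {y : κ → ι → A} (h : ∀ k ∈ T, QuantumRows q S (y k) x) :
    QuantumRows q S (fun s => ∑ k ∈ T, y k s) x where
  qCommute s hs := by
    rw [QCommute, Finset.sum_mul, Finset.mul_sum, Finset.smul_sum]
    exact Finset.sum_congr rfl fun k hk => (h k hk).qCommute s hs
  commute s hs r hr hrs := Commute.sum_left _ _ _ fun k hk => (h k hk).commute s hs r hr hrs
  mul_eq s hs r hr hsr := by
    rw [Finset.sum_mul, Finset.mul_sum, Finset.mul_sum, Finset.smul_sum, ← Finset.sum_add_distrib]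
    exact Finset.sum_congr rfl fun k hk => (h k hk).mul_eq s hs r hr hsr

lemma tmul_mul_tmul {w : ι → B} (h : QuantumRows q S y x) (hq : q ≠ 0)
    (hw : ∀ s ∈ S, ∀ r ∈ S, s < r → QCommute q (w s) (w r)) {s r : ι} (hs : s ∈ S) (hr : r ∈ S) :
    (y s ⊗ₜ[K] w s) * (x r ⊗ₜ[K] w r) = q • ((x r ⊗ₜ[K] w r) * (y s ⊗ₜ[K] w s)) +
      ((if s < r then (q - q⁻¹) • ((x s * y r) ⊗ₜ[K] (w s * w r)) else 0) -
        if r < s then (q - q⁻¹) • ((x r * y s) ⊗ₜ[K] (w r * w s)) else 0) := by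
  simp only [Algebra.TensorProduct.tmul_mul_tmul]
  rcases lt_trichotomy s r with hsr | rfl | hrs
  · rw [if_pos hsr, if_neg hsr.not_gt, h.mul_eq s hs r hr hsr, hw s hs r hr hsr, sub_zero]
    simp only [TensorProduct.add_tmul, TensorProduct.tmul_smul, ← TensorProduct.smul_tmul',
      smul_add, smul_comm q]
  · rw [h.qCommute s hs]
    simp [TensorProduct.smul_tmul']
  · have hqq : (q - q⁻¹) * q = q * q - 1 := by field_simp
    rw [if_neg hrs.not_gt, if_pos hrs, h.commute s hs r hr hrs, hw r hr s hs hrs,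
      TensorProduct.tmul_smul, smul_smul, smul_smul, hqq]
    module

/-- This is Manin's coaction of quantum matrices on the quantum space with coordinates `w`. It holds
because the corrections to `q`-commutation in `tmul_mul_tmul` are antisymmetric in the columns. -/
lemma qCommute_sum_tmul {w : ι → B} (h : QuantumRows q S y x) (hq : q ≠ 0)
    (hw : ∀ s ∈ S, ∀ r ∈ S, s < r → QCommute q (w s) (w r)) :
    QCommute q (∑ s ∈ S, y s ⊗ₜ[K] w s) (∑ r ∈ S, x r ⊗ₜ[K] w r) := by
  rw [QCommute, Finset.sum_mul_sum, Finset.sum_mul_sum,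
    Finset.sum_congr rfl fun s hs => Finset.sum_congr rfl fun r hr => h.tmul_mul_tmul hq hw hs hr]
  simp only [Finset.sum_add_distrib, Finset.sum_sub_distrib, ← Finset.smul_sum]
  rw [Finset.sum_comm, add_eq_left, sub_eq_zero]
  exact Finset.sum_comm

end QuantumRows

end QuantumRows

section RMatrix

variable {n i j a b : ℕ} {q v : ℂ}

lemma eq_pr_iff (hi : 1 ≤ i) : i = pr n j ↔ i + j = n + 1 := by
  unfold pr
  omega

lemma Rc_of_add_ne (hi : 1 ≤ i) (hb : 1 ≤ b) (h : i + j ≠ n + 1 ∨ a + b ≠ n + 1) :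
    Rc n q v i j a b =
      (if i = a ∧ j = b then if i = j then q else 1 else 0) +
        if i = b ∧ j = a then if j < i then q - q⁻¹ else 0 else 0 := by
  have hJ : Jc n v j i * Jc n v a b = 0 := by
    simp only [Jc, eq_pr_iff hi, eq_pr_iff hb]
    grind
  simp only [Rc, hJ, sub_zero, eq_pr_iff hi]
  congr 1
  · by_cases hab : i = a ∧ j = b
    · have hij : i + j ≠ n + 1 := by grind
      by_cases i = j <;> simp_all
    · grind
  · grind

lemma Rc_middle {k l : ℕ} (hii : i + i = n + 1) :
    Rc n q v i i k l =
      (if l = i then if k = i then 1 else 0 else 0) -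
        if l = pr n k then if k < i then (q - q⁻¹) * v ^ (-twoRho n k) else 0 else 0 := by
  have hi : 1 ≤ i := by omega
  have hJ : Jc n v i i = 1 := by
    rw [Jc, if_pos ((eq_pr_iff hi).2 hii), twoRho, if_neg (by omega), if_pos (by omega), neg_zero,
      zpow_zero]
  rw [Rc, hJ]
  simp only [eq_pr_iff hi, hii, Jc, if_true, sub_self, zpow_zero]
  grind

variable {M : Type*} [AddCommGroup M] [Module ℂ M]

lemma sum_upper_Rc_smul (ha : a ∈ Finset.Icc 1 n) (hb : b ∈ Finset.Icc 1 n)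
    (h : a + b ≠ n + 1) (f : ℕ → ℕ → M) :
    ∑ i ∈ Finset.Icc 1 n, ∑ j ∈ Finset.Icc 1 n, Rc n q v i j a b • f i j =
      (if a = b then q else 1) • f a b + (if a < b then q - q⁻¹ else 0) • f b a := by
  rw [Finset.sum_congr rfl fun i hi => Finset.sum_congr rfl fun j _ => by
    rw [Rc_of_add_ne (Finset.mem_Icc.1 hi).1 (Finset.mem_Icc.1 hb).1 (.inr h)]]
  simp [add_smul, Finset.sum_add_distrib, ite_and, Finset.sum_ite_irrel, ha, hb]

lemma sum_lower_Rc_smul (hi : i ∈ Finset.Icc 1 n) (hj : j ∈ Finset.Icc 1 n)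
    (h : i + j ≠ n + 1) (f : ℕ → ℕ → M) :
    ∑ a ∈ Finset.Icc 1 n, ∑ b ∈ Finset.Icc 1 n, Rc n q v i j a b • f a b =
      (if i = j then q else 1) • f i j + (if j < i then q - q⁻¹ else 0) • f j i := by
  rw [Finset.sum_congr rfl fun a _ => Finset.sum_congr rfl fun b hb => by
    rw [Rc_of_add_ne (Finset.mem_Icc.1 hi).1 (Finset.mem_Icc.1 hb).1 (.inl h)]]
  simp [add_smul, Finset.sum_add_distrib, ite_and, Finset.sum_ite_irrel, hi, hj]

lemma sum_Rc_middle_smul (hii : i + i = n + 1) (f : ℕ → ℕ → M) :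
    ∑ k ∈ Finset.Icc 1 n, ∑ l ∈ Finset.Icc 1 n, Rc n q v i i k l • f k l =
      f i i - (q - q⁻¹) • ∑ k ∈ Finset.Ico 1 i, v ^ (-twoRho n k) • f k (pr n k) := by
  have hmem : i ∈ Finset.Icc 1 n := by grind
  have hIco : (Finset.Icc 1 n).filter (· < i) = Finset.Ico 1 i := by grind
  have hpr : ∀ k ∈ Finset.Ico 1 i, pr n k ∈ Finset.Icc 1 n := by grind [pr]
  simp only [Rc_middle hii, sub_smul, Finset.sum_sub_distrib, ite_smul, zero_smul, one_smul,
    Finset.sum_ite_eq', hmem, if_true, Finset.smul_sum, smul_smul]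
  congr 1
  rw [← hIco, Finset.sum_filter]
  refine Finset.sum_congr rfl fun k hk => ?_
  grind

end RMatrix

section Generators

variable {n i j a b : ℕ} {q v : ℂ}

lemma z_eq_zero_of_lt (h : j < i) : z n q v i j = 0 :=
  (RingQuot.mkAlgHom_rel ℂ (Rel.lower i j h)).trans (map_zero _)

lemma z_eq_zero_of_notMem (h : i ∉ Finset.Icc 1 n ∨ j ∉ Finset.Icc 1 n) : z n q v i j = 0 :=
  (RingQuot.mkAlgHom_rel ℂ (Rel.out i j (by grind))).trans (map_zero _)

lemma frt_relation (hi : i ∈ Finset.Icc 1 n) (hb : b ∈ Finset.Icc 1 n) (hj : j ∈ Finset.Icc 1 n)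
    (ha : a ∈ Finset.Icc 1 n) :
    ∑ l ∈ Finset.Icc 1 n, ∑ k ∈ Finset.Icc 1 n, Rc n q v l k a b • (z n q v i k * z n q v j l) =
      ∑ k ∈ Finset.Icc 1 n, ∑ l ∈ Finset.Icc 1 n,
        Rc n q v j i k l • (z n q v k a * z n q v l b) := by
  have h := RingQuot.mkAlgHom_rel ℂ (Rel.frt (q := q) (v := v) i b j a hi hb hj ha)
  simp only [frtRel, map_sum, map_sub, map_smul, map_mul, map_zero, Finset.sum_sub_distrib] at h
  rw [Finset.sum_comm]
  exact sub_eq_zero.1 h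

lemma frt_relation_of_add_ne (hij : i + j ≠ n + 1) (hab : a + b ≠ n + 1) :
    (if a = b then q else 1) • (z n q v i b * z n q v j a) +
        (if a < b then q - q⁻¹ else 0) • (z n q v i a * z n q v j b) =
      (if j = i then q else 1) • (z n q v j a * z n q v i b) +
        (if i < j then q - q⁻¹ else 0) • (z n q v i a * z n q v j b) := by
  by_cases hmem : i ∈ Finset.Icc 1 n ∧ j ∈ Finset.Icc 1 n ∧ a ∈ Finset.Icc 1 n ∧
      b ∈ Finset.Icc 1 n
  · obtain ⟨hi, hj, ha, hb⟩ := hmem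
    rw [← sum_upper_Rc_smul ha hb hab fun l k => z n q v i k * z n q v j l,
      frt_relation hi hb hj ha, sum_lower_Rc_smul hj hi (by rwa [add_comm])
        fun k l => z n q v k a * z n q v l b]
  · simp only [not_and_or] at hmem
    rcases hmem with h | h | h | h <;>
      simp [z_eq_zero_of_notMem (Or.inl h), z_eq_zero_of_notMem (Or.inr h)]

lemma qCommute_z_same_col (hij : i < j) (hadd : i + j ≠ n + 1) (haa : a + a ≠ n + 1) :
    QCommute q (z n q v i a) (z n q v j a) := by
  have h := frt_relation_of_add_ne (q := q) (v := v) (add_comm i j ▸ hadd) haa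
  simpa [QCommute, hij.ne, hij.not_gt] using h.symm

lemma commute_z_of_lt_of_gt (hij : i < j) (hadd : i + j ≠ n + 1) (hba : b < a)
    (hab : a + b ≠ n + 1) : Commute (z n q v i a) (z n q v j b) := by
  have h := frt_relation_of_add_ne (q := q) (v := v) (add_comm i j ▸ hadd) hab
  simpa [Commute, SemiconjBy, hij.ne, hij.not_gt, hba.ne', hba.not_gt] using h.symm

lemma z_mul_z_of_lt_of_lt (hij : i < j) (hadd : i + j ≠ n + 1) (hab : a < b)
    (hadd' : a + b ≠ n + 1) :
    z n q v i a * z n q v j b = z n q v j b * z n q v i a +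
      (q - q⁻¹) • (z n q v j a * z n q v i b) := by
  have hadd'' : b + a ≠ n + 1 := add_comm a b ▸ hadd'
  have h := frt_relation_of_add_ne (q := q) (v := v) hadd hadd''
  rw [← (commute_z_of_lt_of_gt hij hadd hab hadd'').eq]
  simpa [hij, hij.ne', hab.ne', hab.not_gt] using h

lemma quantumRows_z {S : Finset ℕ} (hij : i < j) (hadd : i + j ≠ n + 1)
    (hS : ∀ s ∈ S, ∀ r ∈ S, s + r ≠ n + 1) :
    QuantumRows q S (z n q v i) (z n q v j) where
  qCommute s hs := qCommute_z_same_col hij hadd (hS s hs s hs)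
  commute s hs r hr hrs := commute_z_of_lt_of_gt hij hadd hrs (hS s hs r hr)
  mul_eq s hs r hr hsr := z_mul_z_of_lt_of_lt hij hadd hsr (hS s hs r hr)

end Generators

section MiddleRow

variable {n i s t : ℕ} {q v : ℂ}

/-- The sum `∑_{k = i+1}^t q^{-k} z_{k's} z_{kt}` over pairs of conjugate rows. When `i` is the
middle row, it measures the failure of `z_{it}` and `z_{is}` to commute. -/
def conjSum (n : ℕ) (q v : ℂ) (i t s : ℕ) : OB n q v :=
  ∑ k ∈ Finset.Icc (i + 1) t, q ^ (-(k : ℤ)) • (z n q v (pr n k) s * z n q v k t)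

lemma conjSum_eq_sum_Icc (ht : t ≤ n) :
    conjSum n q v i t s =
      ∑ k ∈ Finset.Icc (i + 1) n, q ^ (-(k : ℤ)) • (z n q v (pr n k) s * z n q v k t) := by
  refine Finset.sum_subset (Finset.Icc_subset_Icc_right ht) fun k hk hkt => ?_
  rw [z_eq_zero_of_lt (i := k) (by grind), mul_zero, smul_zero]

lemma zpow_neg_twoRho_pr {k : ℕ} (hi : i + i = n + 1) (hv0 : v ≠ 0) (hik : i < k) (hk : k ≤ n) :
    v ^ (-twoRho n (pr n k)) = v ^ (2 * i + 1) * (v ^ 2) ^ (-(k : ℤ)) := by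
  rw [← zpow_natCast v (2 * i + 1), ← zpow_natCast v 2, ← zpow_mul, ← zpow_add₀ hv0]
  congr 1
  unfold twoRho pr
  rw [if_pos (by omega)]
  omega

lemma sum_zpow_twoRho_smul_eq (hi : i + i = n + 1) (hv0 : v ≠ 0) (hv : v ^ 2 = q) (ht : t ≤ n) :
    ∑ k ∈ Finset.Ico 1 i, v ^ (-twoRho n k) • (z n q v k s * z n q v (pr n k) t) =
      v ^ (2 * i + 1) • conjSum n q v i t s := by
  have hpr : ∀ k, k ≤ n → pr n (pr n k) = k := by grind [pr]
  rw [conjSum_eq_sum_Icc ht, Finset.smul_sum]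
  refine Finset.sum_nbij' (pr n) (pr n) (by grind [pr]) (by grind [pr]) (by grind) (by grind)
    fun k hk => ?_
  rw [smul_smul, ← hv, ← zpow_neg_twoRho_pr hi hv0 (by grind [pr]) (by grind [pr]),
    hpr k (by grind)]

lemma lie_z_middle (hi : i + i = n + 1) (hv0 : v ≠ 0) (hv : v ^ 2 = q) (ht : 1 ≤ t) (hts : t < s)
    (hs : s ≤ n) (hadd : s + t ≠ n + 1) :
    ⁅z n q v i t, z n q v i s⁆ = (-(q - q⁻¹) * v ^ (2 * i + 1)) • conjSum n q v i t s := by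
  have hmem : i ∈ Finset.Icc 1 n := by grind
  have h := frt_relation (q := q) (v := v) hmem (b := t) (by grind) hmem (a := s) (by grind)
  rw [sum_upper_Rc_smul (by grind) (by grind) hadd fun l k => z n q v i k * z n q v i l,
    sum_Rc_middle_smul hi fun k l => z n q v k s * z n q v l t,
    sum_zpow_twoRho_smul_eq hi hv0 hv (by grind), if_neg hts.ne', if_neg hts.not_gt, one_smul,
    zero_smul, add_zero] at h
  rw [Ring.lie_def, h]
  module

lemma qCommute_z_conjSum (hi : i + i = n + 1) (hit : i ≤ t) (hts : t < s) :
    QCommute q (z n q v i t) (conjSum n q v i t s) := by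
  refine QCommute.sum_right fun k hk => QCommute.smul_right ?_ _
  have hrow : QCommute (1 : ℂ) (z n q v i t) (z n q v (pr n k) s) :=
    qCommute_one_iff.2 (commute_z_of_lt_of_gt (by grind [pr]) (by grind [pr]) hts (by grind)).symm
  have hcol : QCommute q (z n q v i t) (z n q v k t) :=
    qCommute_z_same_col (by grind) (by grind) (by grind)
  simpa using hrow.mul_right hcol

lemma quantumRows_conjSum {S : Finset ℕ} (hi : i + i = n + 1) (hit : i ≤ t)
    (hS : ∀ s ∈ S, t < s) : QuantumRows q S (conjSum n q v i t) (z n q v i) := by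
  refine QuantumRows.sum fun k hk => ((quantumRows_z ?_ ?_ ?_).mul_right fun r hr => ?_).smul _
  · grind [pr]
  · grind [pr]
  · grind
  · exact (commute_z_of_lt_of_gt (by grind) (by grind) (hS r hr) (by grind)).symm

variable {B : Type*} [Ring B] [Algebra ℂ B] {w : ℕ → B} {S : Finset ℕ}

lemma tmul_mul_sum_sub_smul_eq_sum_conjSum (hi : i + i = n + 1) (hv0 : v ≠ 0) (hv : v ^ 2 = q)
    (hit : i ≤ t) (hS : ∀ s ∈ S, t < s ∧ s ≤ n) (hw : ∀ s ∈ S, QCommute q (w t) (w s)) :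
    (z n q v i t ⊗ₜ[ℂ] w t) * (∑ s ∈ S, z n q v i s ⊗ₜ[ℂ] w s) -
        q • ((∑ s ∈ S, z n q v i s ⊗ₜ[ℂ] w s) * (z n q v i t ⊗ₜ[ℂ] w t)) =
      (-(q - q⁻¹) * v ^ (2 * i + 3)) • ∑ s ∈ S, conjSum n q v i t s ⊗ₜ[ℂ] (w s * w t) := by
  have hcoef : q * (-(q - q⁻¹) * v ^ (2 * i + 1)) = -(q - q⁻¹) * v ^ (2 * i + 3) := by
    rw [← hv]
    ring
  rw [tmul_mul_sum_sub_smul_sum_mul_tmul hw, Finset.smul_sum, Finset.smul_sum]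
  refine Finset.sum_congr rfl fun s hs => ?_
  rw [lie_z_middle hi hv0 hv (by grind) (hS s hs).1 (hS s hs).2 (by grind),
    ← TensorProduct.smul_tmul', smul_smul, hcoef]

lemma qCommute_tmul_sum_conjSum (hi : i + i = n + 1) (hit : i ≤ t) (hS : ∀ s ∈ S, t < s)
    (hw : ∀ s ∈ S, QCommute q (w t) (w s)) :
    QCommute (q ^ 2) (z n q v i t ⊗ₜ[ℂ] w t)
      (∑ s ∈ S, conjSum n q v i t s ⊗ₜ[ℂ] (w s * w t)) := by
  refine QCommute.sum_right fun s hs => ?_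
  have hcol : QCommute (q * 1) (w t) (w s * w t) :=
    (hw s hs).mul_right (qCommute_one_iff.2 (.refl _))
  simpa [sq] using (qCommute_z_conjSum hi hit (hS s hs)).tmul hcol

lemma qCommute_sum_conjSum_sum_z (hq : q ≠ 0) (hi : i + i = n + 1) (hit : i ≤ t)
    (hS : ∀ s ∈ S, t < s) (hwt : ∀ s ∈ S, QCommute q (w t) (w s))
    (hw : ∀ s ∈ S, ∀ r ∈ S, s < r → QCommute q (w s) (w r)) :
    QCommute (q ^ 2) (∑ s ∈ S, conjSum n q v i t s ⊗ₜ[ℂ] (w s * w t))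
      (∑ s ∈ S, z n q v i s ⊗ₜ[ℂ] w s) := by
  have hfactor : ∑ s ∈ S, conjSum n q v i t s ⊗ₜ[ℂ] (w s * w t) =
      (∑ s ∈ S, conjSum n q v i t s ⊗ₜ[ℂ] w s) * (1 ⊗ₜ[ℂ] w t) := by
    simp [Finset.sum_mul]
  have hwx : QCommute (1 * q) ((1 : OB n q v) ⊗ₜ[ℂ] w t) (∑ s ∈ S, z n q v i s ⊗ₜ[ℂ] w s) :=
    QCommute.sum_right fun s hs => (qCommute_one_iff.2 (.one_left _)).tmul (hwt s hs)
  rw [hfactor]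
  simpa [sq] using ((quantumRows_conjSum hi hit hS).qCommute_sum_tmul hq hw).mul_left hwx

end MiddleRow

/-- The identities used in Case 2 of the proof of the theorem computing
`Δ(z_{ij}^N)` in `𝒪_q(B⁺)` of type `SO_n` with `n` odd; here `n₀ = (n+1)/2` and
`q^{n₀+3/2} := v^{2n₀+3}`. -/
theorem case2_identities (n : ℕ) (hn : 3 ≤ n) (hodd : Odd n) (q v : ℂ) (hq0 : q ≠ 0)
    (hv : v ^ 2 = q) (t j : ℕ) (ht : (n + 1) / 2 ≤ t) (htj : t < j) (hj : j ≤ n)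
    (b : ℕ → OB n q v ⊗[ℂ] OB n q v)
    (hb : ∀ s : ℕ, b s = z n q v ((n + 1) / 2) s ⊗ₜ[ℂ] z n q v s j)
    (b' c : OB n q v ⊗[ℂ] OB n q v)
    (hb' : b' = ∑ k ∈ Finset.Icc (t + 1) j, b k)
    (hc : c = b t * b' - q • (b' * b t)) :
    (c = (-(q - q⁻¹) * v ^ (2 * ((n + 1) / 2) + 3)) •
        ∑ s ∈ Finset.Icc (t + 1) j, ∑ k ∈ Finset.Icc ((n + 1) / 2 + 1) t,
          (q ^ (-(k : ℤ))) •
            ((z n q v (pr n k) s * z n q v k t) ⊗ₜ[ℂ] (z n q v s j * z n q v t j))) ∧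
    (b t * c = (q ^ 2) • (c * b t)) ∧
    (c * b' = (q ^ 2) • (b' * c)) := by
  have hn₀ : (n + 1) / 2 + (n + 1) / 2 = n + 1 := by grind
  have hv0 : v ≠ 0 := fun h => hq0 (by simp [← hv, h])
  generalize (n + 1) / 2 = n₀ at *
  have hS : ∀ s ∈ Finset.Icc (t + 1) j, t < s := by grind
  have hcol : ∀ s r, t ≤ s → s < r → QCommute q (z n q v s j) (z n q v r j) :=
    fun s r hts hsr => qCommute_z_same_col hsr (by omega) (by omega)
  have hcolt : ∀ s ∈ Finset.Icc (t + 1) j, QCommute q (z n q v t j) (z n q v s j) :=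
    fun s hs => hcol t s le_rfl (hS s hs)
  simp only [hb] at hb' hc ⊢
  have hc' : c = (-(q - q⁻¹) * v ^ (2 * n₀ + 3)) • ∑ s ∈ Finset.Icc (t + 1) j,
      conjSum n q v n₀ t s ⊗ₜ[ℂ] (z n q v s j * z n q v t j) := by
    rw [hc, hb']
    exact tmul_mul_sum_sub_smul_eq_sum_conjSum hn₀ hv0 hv ht (by grind) hcolt
  refine ⟨?_, ?_, ?_⟩
  · simp only [hc', conjSum, TensorProduct.sum_tmul, TensorProduct.smul_tmul']
  · rw [hc']
    exact (qCommute_tmul_sum_conjSum (w := (z n q v · j)) hn₀ ht hS hcolt).smul_right _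
  · rw [hc', hb']
    exact (qCommute_sum_conjSum_sum_z hq0 hn₀ ht hS hcolt (by grind)).smul_left _

end SOq
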